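/- arXiv:0808.1228 — 3 statements merged into one kernel-verified Lean document; each statement's English description precedes it below -/
import Mathlib

section
/- The icosian ring is invariant under the twist map: for every quaternion q ∈ ℍ(K), q lies in the icosian ring 𝕀 if and only if its twist q̃ lies in 𝕀 (i.e., 𝕀̃ = 𝕀). -/
/-!
The twist is a semilinear map over Galois conjugation `′`, so it suffices to see what it does to
the basis. It fixes `v₁`, `v₂`, `v₃`, and since `τ′ = 1 - τ` it sends `v₄ = ½(1-τ, τ, 0, 1)` to
`½(τ, 1-τ, 1, 0) = v₃ - v₄`. As `′` maps `ℤ[τ]` to itself, the twist maps the icosian ring into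
itself (`inIcosian_twist`). The converse holds because the twist is an involution on `ℍ(K)`
(`twist_twist`). Both facts rest on `gal` being well defined, that is, on `√5` being irrational
(`gal_eq`).
-/

noncomputable section

open Quaternion

/-- Hamilton's quaternion algebra over `ℝ`. -/
abbrev HR := Quaternion ℝ

/-- the golden ratio `τ = (1+√5)/2`. -/
def tau : ℝ := (1 + Real.sqrt 5) / 2

/-- membership in the quadratic field `K = ℚ(√5)`, viewed inside `ℝ`. -/
def inK (x : ℝ) : Prop := ∃ q r : ℚ, x = (q : ℝ) + (r : ℝ) * Real.sqrt 5

/-- membership in the ring of integers `𝔬 = ℤ[τ]` of `K`, viewed inside `ℝ`. -/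
def inO (x : ℝ) : Prop := ∃ m n : ℤ, x = (m : ℝ) + (n : ℝ) * tau

/-- membership in `ℍ(K)`: all four components lie in `K`. -/
def inHK (q : HR) : Prop := inK q.re ∧ inK q.imI ∧ inK q.imJ ∧ inK q.imK

open scoped Classical in
/-- Galois conjugation `′` on `K = ℚ(√5)`, sending `q + r√5` to `q - r√5`
(extended by the identity off `K`; on `K` this is the usual Galois conjugation,
since the representation `x = q + r√5` with `q, r ∈ ℚ` is unique). -/
noncomputable def gal (x : ℝ) : ℝ :=
  if h : ∃ q r : ℚ, x = (q : ℝ) + (r : ℝ) * Real.sqrt 5 then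
    ((h.choose : ℝ) - (h.choose_spec.choose : ℝ) * Real.sqrt 5)
  else x

/-- the twist map `q = (a,b,c,d) ↦ q̃ = (a′,b′,d′,c′)` on `ℍ(K)`. -/
def twist (q : HR) : HR := ⟨gal q.re, gal q.imI, gal q.imK, gal q.imJ⟩

def v₁ : HR := ⟨1, 0, 0, 0⟩
def v₂ : HR := ⟨0, 1, 0, 0⟩
def v₃ : HR := ⟨1/2, 1/2, 1/2, 1/2⟩
def v₄ : HR := ⟨(1 - tau)/2, tau/2, 0, 1/2⟩

/-- membership in the icosian ring `𝕀`: the `𝔬`-span of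
`(1,0,0,0)`, `(0,1,0,0)`, `½(1,1,1,1)`, `½(1−τ,τ,0,1)`. -/
def inIcosian (q : HR) : Prop :=
  ∃ a b c d : ℝ, inO a ∧ inO b ∧ inO c ∧ inO d ∧
    q = a • v₁ + b • v₂ + c • v₃ + d • v₄

def w₁ : HR := ⟨1, 0, 0, 0⟩
def w₂ : HR := ⟨-(1/2), 1/2, 1/2, 1/2⟩
def w₃ : HR := ⟨0, -1, 0, 0⟩
def w₄ : HR := ⟨0, 1/2, (tau - 1)/2, -(tau/2)⟩

/-- the lattice `L` (a copy of the root lattice `A₄`): the `ℤ`-span of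
`(1,0,0,0)`, `½(−1,1,1,1)`, `(0,−1,0,0)`, `½(0,1,τ−1,−τ)`. -/
def Lsub : AddSubgroup HR :=
  (Submodule.span ℤ ({w₁, w₂, w₃, w₄} : Set HR)).toAddSubgroup

/-- `Λ` is a similar sublattice (SSL) of `L`: `Λ = α R(L) ⊆ L` for some
`α > 0` and a linear isometry `R` of `ℍ ≅ ℝ⁴`. -/
def IsSSL (Λ : AddSubgroup HR) : Prop :=
  ∃ (α : ℝ) (R : HR ≃ₗᵢ[ℝ] HR), 0 < α ∧
    (Λ : Set HR) = (fun x => α • R x) '' (Lsub : Set HR) ∧ Λ ≤ Lsub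

/-- `p` is an `𝕀`-primitive icosian: `p ∈ 𝕀` and whenever `α ∈ K` with
`α p ∈ 𝕀`, one has `α ∈ 𝔬`. -/
def IPrimitive (p : HR) : Prop :=
  inIcosian p ∧ ∀ α : ℝ, inK α → inIcosian (α • p) → inO α

/-- an icosian `q` is admissible when `|q q̃|` is a rational integer. -/
def Admissible (q : HR) : Prop := ∃ n : ℤ, ‖q * twist q‖ = (n : ℝ)

lemma inO_add {x y : ℝ} (hx : inO x) (hy : inO y) : inO (x + y) := by
  obtain ⟨m, n, rfl⟩ := hx; obtain ⟨m', n', rfl⟩ := hy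
  exact ⟨m + m', n + n', by push_cast; ring⟩

lemma inO_neg {x : ℝ} (hx : inO x) : inO (-x) := by
  obtain ⟨m, n, rfl⟩ := hx
  exact ⟨-m, -n, by push_cast; ring⟩

/-- the icosian ring `𝕀` as an additive subgroup of `ℍ`. -/
def Isub : AddSubgroup HR where
  carrier := {q | inIcosian q}
  zero_mem' := ⟨0, 0, 0, 0, ⟨0, 0, by push_cast; ring⟩, ⟨0, 0, by push_cast; ring⟩,
    ⟨0, 0, by push_cast; ring⟩, ⟨0, 0, by push_cast; ring⟩, by simp⟩
  add_mem' := by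
    rintro x y ⟨a, b, c, d, ha, hb, hc, hd, rfl⟩ ⟨a', b', c', d', ha', hb', hc', hd', rfl⟩
    exact ⟨a + a', b + b', c + c', d + d', inO_add ha ha', inO_add hb hb',
      inO_add hc hc', inO_add hd hd', by simp [add_smul]; abel⟩
  neg_mem' := by
    rintro x ⟨a, b, c, d, ha, hb, hc, hd, rfl⟩
    exact ⟨-a, -b, -c, -d, inO_neg ha, inO_neg hb, inO_neg hc, inO_neg hd,
      by simp [neg_smul]; abel⟩

/-- the additive map `x ↦ p x p̃`. -/
def conjHom (p : HR) : HR →+ HR :=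
  AddMonoidHom.mk' (fun x => p * x * twist p) (fun a b => by simp [mul_add, add_mul])

/-- the additive map `x ↦ (1/|q q̃|) · q x q̃`. -/
def cslHom (q : HR) : HR →+ HR :=
  AddMonoidHom.mk' (fun x => (1 / ‖q * twist q‖) • (q * x * twist q))
    (fun a b => by simp [mul_add, add_mul, smul_add])

/-- the subgroup `L ∩ (1/|q q̃|) · q L q̃` of `ℍ`. -/
def cslSub (q : HR) : AddSubgroup HR := Lsub ⊓ Lsub.map (cslHom q)

/-- for a rotation `R`, the subgroup `Γ ∩ R(Γ)`. -/
def cslOf (Γ : AddSubgroup HR) (R : HR ≃ₗᵢ[ℝ] HR) : AddSubgroup HR :=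
  Γ ⊓ Γ.map R.toLinearEquiv.toLinearMap.toAddMonoidHom

/-- the standard Euclidean inner product on `ℍ ≅ ℝ⁴`. -/
def dot (x y : HR) : ℝ := x.re * y.re + x.imI * y.imI + x.imJ * y.imJ + x.imK * y.imK

/-- the dual lattice `L* = {x ∈ ℍ : ⟨x|y⟩ ∈ ℤ for all y ∈ L}`. -/
def Ldual : AddSubgroup HR where
  carrier := {x | ∀ y ∈ Lsub, ∃ n : ℤ, dot x y = n}
  zero_mem' := by intro y _; exact ⟨0, by simp [dot]⟩
  add_mem' := by
    intro a b ha hb y hy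
    obtain ⟨m, hm⟩ := ha y hy; obtain ⟨n, hn⟩ := hb y hy
    refine ⟨m + n, ?_⟩
    have : dot (a + b) y = dot a y + dot b y := by simp [dot]; ring
    rw [this, hm, hn]; push_cast; ring
  neg_mem' := by
    intro a ha y hy
    obtain ⟨m, hm⟩ := ha y hy
    refine ⟨-m, ?_⟩
    have : dot (-a) y = -dot a y := by simp [dot]; ring
    rw [this, hm]; push_cast; ring

/-- The value of `gal` does not depend on the representation of `x` that it chooses: `1` and `√5`
are linearly independent over `ℚ`. -/
lemma gal_eq {x : ℝ} (q r : ℚ) (hx : x = (q : ℝ) + (r : ℝ) * Real.sqrt 5) :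
    gal x = (q : ℝ) - (r : ℝ) * Real.sqrt 5 := by
  have h : ∃ q r : ℚ, x = (q : ℝ) + (r : ℝ) * Real.sqrt 5 := ⟨q, r, hx⟩
  rw [gal, dif_pos h]
  have hs := h.choose_spec.choose_spec
  generalize h.choose_spec.choose = r' at hs ⊢
  generalize h.choose = q' at hs ⊢
  have hirr : Irrational (Real.sqrt 5) := by
    simpa using Nat.Prime.irrational_sqrt (p := 5) (by norm_num)
  have hr : r' = r := by
    by_contra hne
    have hne' : (r' : ℝ) - r ≠ 0 := sub_ne_zero.mpr (by exact_mod_cast hne)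
    refine hirr ⟨(q - q') / (r' - r), ?_⟩
    push_cast
    rw [div_eq_iff hne']
    linarith
  subst hr
  linarith

lemma gal_gal {x : ℝ} (hx : inK x) : gal (gal x) = x := by
  obtain ⟨q, r, rfl⟩ := hx
  rw [gal_eq q r rfl, gal_eq q (-r) (by push_cast; ring)]
  push_cast
  ring

lemma twist_twist {q : HR} (hq : inHK q) : twist (twist q) = q := by
  obtain ⟨h₁, h₂, h₃, h₄⟩ := hq
  ext <;> simp [twist, gal_gal, *]

lemma icosian_components (a b c d : ℝ) :
    a • v₁ + b • v₂ + c • v₃ + d • v₄ =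
      (⟨a + c / 2 + d * (1 - tau) / 2, b + c / 2 + d * tau / 2, c / 2, c / 2 + d / 2⟩ : HR) := by
  ext <;> simp <;> simp [v₁, v₂, v₃, v₄] <;> ring

/-- If `q = a v₁ + b v₂ + c v₃ + d v₄` then `q̃ = a′ v₁ + b′ v₂ + (c′ + d′) v₃ - d′ v₄`. -/
lemma inIcosian_twist {q : HR} (hq : inIcosian q) : inIcosian (twist q) := by
  obtain ⟨_, _, _, _, ⟨a, a', rfl⟩, ⟨b, b', rfl⟩, ⟨c, c', rfl⟩, ⟨d, d', rfl⟩, rfl⟩ := hq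
  have h5 : Real.sqrt 5 * Real.sqrt 5 = 5 := Real.mul_self_sqrt (by norm_num)
  -- The conjugate of `m + n τ` is `(m + n) - n τ`.
  refine ⟨((a + a' : ℤ) : ℝ) + ((-a' : ℤ) : ℝ) * tau, ((b + b' : ℤ) : ℝ) + ((-b' : ℤ) : ℝ) * tau,
    ((c + c' + d + d' : ℤ) : ℝ) + ((-c' - d' : ℤ) : ℝ) * tau,
    ((-d - d' : ℤ) : ℝ) + ((d' : ℤ) : ℝ) * tau,
    ⟨_, _, rfl⟩, ⟨_, _, rfl⟩, ⟨_, _, rfl⟩, ⟨_, _, rfl⟩, ?_⟩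
  rw [icosian_components, icosian_components]
  -- In each component, `gal_eq` is given the rational and the `√5` part, read off after
  -- substituting `τ = (1 + √5) / 2`.
  ext
  · simp only [twist]
    rw [gal_eq (a + a' / 2 + c / 2 + c' / 4 + d / 4 - d' / 2) (a' / 2 + c' / 4 - d / 4)]
    · simp [tau]
      linear_combination (d' / 8 : ℝ) * h5
    · simp [tau]
      linear_combination (-d' / 8 : ℝ) * h5
  · simp only [twist]
    rw [gal_eq (b + b' / 2 + c / 2 + c' / 4 + d / 4 + 3 * d' / 4)
      (b' / 2 + c' / 4 + d / 4 + d' / 4)]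
    · simp [tau]
      linear_combination (-d' / 8 : ℝ) * h5
    · simp [tau]
      linear_combination (d' / 8 : ℝ) * h5
  · simp only [twist]
    rw [gal_eq (c / 2 + c' / 4 + d / 2 + d' / 4) (c' / 4 + d' / 4)]
    · simp [tau]
      ring
    · simp [tau]
      ring
  · simp only [twist]
    rw [gal_eq (c / 2 + c' / 4) (c' / 4)]
    · simp [tau]
      ring
    · simp [tau]
      ring

/-- the icosian ring is invariant under the twist map:
for every `q ∈ ℍ(K)`, `q ∈ 𝕀 ↔ q̃ ∈ 𝕀` (i.e. `𝕀̃ = 𝕀`). -/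
theorem icosian_twist_invariant (q : HR) (hq : inHK q) :
    inIcosian q ↔ inIcosian (twist q) := by
  refine ⟨inIcosian_twist, fun h => ?_⟩
  rw [← twist_twist hq]
  exact inIcosian_twist h
end
end

section
/- The lattice L admits the following three descriptions inside the icosian ring: L = {x ∈ 𝕀 : x̃ = x} = {x + x̃ : x ∈ 𝕀} = φ₊(𝕀), where φ₊ : ℍ(K) → ℍ(K) is the ℚ-linear map φ₊(x) = x + x̃. -/
/-!
Everything is computed in coordinates over `ℚ` with respect to `1` and `√5`, which are linearly
independent, so that Galois conjugation and the twist are explicit (`gal_rat_sqrt_five`,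
`twist_mkHK`). Writing an icosian as `a v₁ + b v₂ + c v₃ + d v₄` with `a = a₀ + a₁τ`, etc.:

* `x̃ = x` says `d = c' - c`, i.e. `d = c₁(1 - 2τ)`, and that the first two components are rational,
  i.e. `a₁ = b₁ = 0`; the remaining free integers `a₀, b₀, c₀, c₁` parametrise exactly `L`
  (`ico_eq_latL_of_twist_eq`, `latL_eq_ico`, `twist_latL`).
* `x + x̃` has integer `w`-coordinates given by an explicit linear formula in the eight integer
  coordinates of `x` (`ico_add_twist`); the formula is onto `ℤ⁴`, already on the icosians with
  `a₀ = b₀ = c₀ = d₀ = 0`.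
-/

noncomputable section

open Quaternion

/-- `1` and `√5` are linearly independent over `ℚ`. -/
lemma rat_sqrt_five_unique {q r q' r' : ℚ}
    (h : (q : ℝ) + r * Real.sqrt 5 = q' + r' * Real.sqrt 5) : q = q' ∧ r = r' := by
  have hirr : Irrational (Real.sqrt 5) := by
    simpa using (show Nat.Prime 5 by norm_num).irrational_sqrt
  have hr : r = r' := by
    by_contra hne
    have hne' : (r : ℝ) - r' ≠ 0 := sub_ne_zero.mpr (by exact_mod_cast hne)
    refine hirr ⟨(q' - q) / (r - r'), ?_⟩
    push_cast
    rw [div_eq_iff hne']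
    linarith
  subst hr
  exact ⟨by exact_mod_cast add_right_cancel h, rfl⟩

lemma gal_rat_sqrt_five (q r : ℚ) :
    gal ((q : ℝ) + r * Real.sqrt 5) = q - r * Real.sqrt 5 := by
  have h : ∃ q' r' : ℚ, (q : ℝ) + r * Real.sqrt 5 = q' + r' * Real.sqrt 5 := ⟨q, r, rfl⟩
  obtain ⟨h1, h2⟩ := rat_sqrt_five_unique h.choose_spec.choose_spec
  rw [gal, dif_pos h]
  exact congrArg₂ (fun a b : ℚ => (a : ℝ) - b * Real.sqrt 5) h1.symm h2.symm

/-- The element of `ℍ(K)` with rational coordinates `pᵢ` along `1` and `qᵢ` along `√5`. -/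
def mkHK (p₀ q₀ p₁ q₁ p₂ q₂ p₃ q₃ : ℚ) : HR :=
  ⟨p₀ + q₀ * Real.sqrt 5, p₁ + q₁ * Real.sqrt 5, p₂ + q₂ * Real.sqrt 5, p₃ + q₃ * Real.sqrt 5⟩

lemma twist_mkHK (p₀ q₀ p₁ q₁ p₂ q₂ p₃ q₃ : ℚ) :
    twist (mkHK p₀ q₀ p₁ q₁ p₂ q₂ p₃ q₃) = mkHK p₀ (-q₀) p₁ (-q₁) p₃ (-q₃) p₂ (-q₂) := by
  simp only [twist, mkHK, gal_rat_sqrt_five]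
  ext <;> simp <;> ring

/-- The icosian with `𝔬`-coordinates `a = a₀ + a₁τ`, and likewise for `b`, `c`, `d`, in the basis
`v₁, v₂, v₃, v₄`, expanded over `ℚ` in `1` and `√5`. -/
def ico (a₀ a₁ b₀ b₁ c₀ c₁ d₀ d₁ : ℤ) : HR :=
  mkHK (a₀ + a₁ / 2 + c₀ / 2 + c₁ / 4 + d₀ / 4 - d₁ / 2) (a₁ / 2 + c₁ / 4 - d₀ / 4)
    (b₀ + b₁ / 2 + c₀ / 2 + c₁ / 4 + d₀ / 4 + 3 * d₁ / 4) (b₁ / 2 + c₁ / 4 + d₀ / 4 + d₁ / 4)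
    (c₀ / 2 + c₁ / 4) (c₁ / 4)
    (c₀ / 2 + c₁ / 4 + d₀ / 2 + d₁ / 4) (c₁ / 4 + d₁ / 4)

/-- The element of `L` with integer coordinates `m₁, m₂, m₃, m₄` in the basis `w₁, w₂, w₃, w₄`,
expanded over `ℚ` in `1` and `√5`. -/
def latL (m₁ m₂ m₃ m₄ : ℤ) : HR :=
  mkHK (m₁ - m₂ / 2) 0 (m₂ / 2 - m₃ + m₄ / 2) 0
    (m₂ / 2 - m₄ / 4) (m₄ / 4) (m₂ / 2 - m₄ / 4) (-m₄ / 4)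

lemma inIcosian_iff (x : HR) :
    inIcosian x ↔ ∃ a₀ a₁ b₀ b₁ c₀ c₁ d₀ d₁ : ℤ, x = ico a₀ a₁ b₀ b₁ c₀ c₁ d₀ d₁ := by
  have h5 : Real.sqrt 5 ^ 2 = 5 := Real.sq_sqrt (by norm_num)
  have key (a₀ a₁ b₀ b₁ c₀ c₁ d₀ d₁ : ℤ) :
      ((a₀ : ℝ) + a₁ * tau) • v₁ + ((b₀ : ℝ) + b₁ * tau) • v₂ + ((c₀ : ℝ) + c₁ * tau) • v₃
        + ((d₀ : ℝ) + d₁ * tau) • v₄ = ico a₀ a₁ b₀ b₁ c₀ c₁ d₀ d₁ := by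
    ext <;> simp <;> simp [ico, mkHK, v₁, v₂, v₃, v₄, tau]
    -- only the products `d₁ τ · τ` in the first two components need `√5 ^ 2 = 5`
    · linear_combination (-(d₁ : ℝ) / 8) * h5
    · linear_combination ((d₁ : ℝ) / 8) * h5
    · ring
    · ring
  constructor
  · rintro ⟨_, _, _, _, ⟨a₀, a₁, rfl⟩, ⟨b₀, b₁, rfl⟩, ⟨c₀, c₁, rfl⟩, ⟨d₀, d₁, rfl⟩, rfl⟩
    exact ⟨a₀, a₁, b₀, b₁, c₀, c₁, d₀, d₁, key ..⟩
  · rintro ⟨a₀, a₁, b₀, b₁, c₀, c₁, d₀, d₁, rfl⟩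
    exact ⟨_, _, _, _, ⟨a₀, a₁, rfl⟩, ⟨b₀, b₁, rfl⟩, ⟨c₀, c₁, rfl⟩, ⟨d₀, d₁, rfl⟩, (key ..).symm⟩

lemma mem_Lsub_iff (x : HR) :
    x ∈ (Lsub : Set HR) ↔ ∃ m₁ m₂ m₃ m₄ : ℤ, x = latL m₁ m₂ m₃ m₄ := by
  have key (m₁ m₂ m₃ m₄ : ℤ) :
      m₁ • w₁ + (m₂ • w₂ + (m₃ • w₃ + m₄ • w₄)) = latL m₁ m₂ m₃ m₄ := by
    ext <;> simp <;> simp [latL, mkHK, w₁, w₂, w₃, w₄, tau] <;> ring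
  have hmem : x ∈ (Lsub : Set HR) ↔ x ∈ Submodule.span ℤ ({w₁, w₂, w₃, w₄} : Set HR) := Iff.rfl
  rw [hmem]
  simp only [Submodule.mem_span_insert, Submodule.mem_span_singleton]
  constructor
  · rintro ⟨m₁, _, ⟨m₂, _, ⟨m₃, _, ⟨m₄, rfl⟩, rfl⟩, rfl⟩, rfl⟩
    exact ⟨m₁, m₂, m₃, m₄, key ..⟩
  · rintro ⟨m₁, m₂, m₃, m₄, rfl⟩
    exact ⟨m₁, _, ⟨m₂, _, ⟨m₃, _, ⟨m₄, rfl⟩, rfl⟩, rfl⟩, (key ..).symm⟩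

lemma twist_latL (m₁ m₂ m₃ m₄ : ℤ) : twist (latL m₁ m₂ m₃ m₄) = latL m₁ m₂ m₃ m₄ := by
  rw [latL, twist_mkHK]
  congr 1 <;> ring

lemma latL_eq_ico (m₁ m₂ m₃ m₄ : ℤ) :
    latL m₁ m₂ m₃ m₄ = ico (m₁ - m₂ - m₄) 0 (2 * m₄ - m₃) 0 (m₂ - m₄) m₄ m₄ (-2 * m₄) := by
  rw [latL, ico]
  congr 1 <;> push_cast <;> ring

/-- A twist-fixed icosian lies in `L`: comparing `√5`-coefficients in `x̃ = x` forces
`d = c₁(1 - 2τ)` and then `a₁ = b₁ = 0`. -/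
lemma ico_eq_latL_of_twist_eq {a₀ a₁ b₀ b₁ c₀ c₁ d₀ d₁ : ℤ}
    (h : twist (ico a₀ a₁ b₀ b₁ c₀ c₁ d₀ d₁) = ico a₀ a₁ b₀ b₁ c₀ c₁ d₀ d₁) :
    ico a₀ a₁ b₀ b₁ c₀ c₁ d₀ d₁
      = latL (a₀ + c₀ + 2 * c₁) (c₀ + c₁) (2 * c₁ - b₀) c₁ := by
  rw [ico, twist_mkHK] at h
  obtain ⟨-, e₀⟩ := rat_sqrt_five_unique (congrArg QuaternionAlgebra.re h)
  obtain ⟨-, e₁⟩ := rat_sqrt_five_unique (congrArg QuaternionAlgebra.imI h)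
  obtain ⟨f₂, e₂⟩ := rat_sqrt_five_unique (congrArg QuaternionAlgebra.imJ h)
  have hd₁ : (d₁ : ℚ) = -2 * c₁ := by linarith
  have hd₀ : (d₀ : ℚ) = c₁ := by linarith
  have ha₁ : (a₁ : ℚ) = 0 := by linarith
  have hb₁ : (b₁ : ℚ) = 0 := by linarith
  rw [ico, latL, hd₁, hd₀, ha₁, hb₁]
  congr 1 <;> push_cast <;> ring

lemma ico_add_twist (a₀ a₁ b₀ b₁ c₀ c₁ d₀ d₁ : ℤ) :
    ico a₀ a₁ b₀ b₁ c₀ c₁ d₀ d₁ + twist (ico a₀ a₁ b₀ b₁ c₀ c₁ d₀ d₁)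
      = latL (2 * a₀ + a₁ + 2 * c₀ + c₁ + d₀ - d₁) (2 * c₀ + c₁ + d₀)
          (-2 * d₁ - 2 * b₀ - b₁) (-d₁) := by
  rw [ico, twist_mkHK]
  ext <;> simp <;> simp [latL, mkHK] <;> ring

/-- `L = {x ∈ 𝕀 : x̃ = x} = {x + x̃ : x ∈ 𝕀} = φ₊(𝕀)`,
where `φ₊(x) = x + x̃`. -/
theorem L_eq_twist_fixed_points_eq_phiPlus_image :
    ((Lsub : Set HR) = {x : HR | inIcosian x ∧ twist x = x}) ∧
    ((Lsub : Set HR) = (fun x => x + twist x) '' {x : HR | inIcosian x}) := by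
  constructor
  · ext x
    rw [mem_Lsub_iff]
    constructor
    · rintro ⟨m₁, m₂, m₃, m₄, rfl⟩
      exact ⟨(inIcosian_iff _).2 ⟨_, _, _, _, _, _, _, _, latL_eq_ico ..⟩, twist_latL ..⟩
    · rintro ⟨hx, ht⟩
      obtain ⟨a₀, a₁, b₀, b₁, c₀, c₁, d₀, d₁, rfl⟩ := (inIcosian_iff _).1 hx
      exact ⟨_, _, _, _, ico_eq_latL_of_twist_eq ht⟩
  · ext x
    rw [mem_Lsub_iff]
    constructor
    · rintro ⟨m₁, m₂, m₃, m₄, rfl⟩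
      -- a preimage under `φ₊` all of whose `𝔬`-coordinates are integer multiples of `τ`
      refine ⟨ico 0 (m₁ - m₂ - m₄) 0 (2 * m₄ - m₃) 0 m₂ 0 (-m₄),
        (inIcosian_iff _).2 ⟨_, _, _, _, _, _, _, _, rfl⟩, ?_⟩
      beta_reduce
      rw [ico_add_twist]
      congr 1 <;> ring
    · rintro ⟨y, hy, rfl⟩
      obtain ⟨a₀, a₁, b₀, b₁, c₀, c₁, d₀, d₁, rfl⟩ := (inIcosian_iff _).1 hy
      exact ⟨_, _, _, _, ico_add_twist ..⟩
end
end

section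
/- Every similar sublattice of L is the image of L under a mapping of the form x ↦ p x q with nonzero p, q ∈ ℍ(K): if Λ ⊆ L is a subgroup of the form αR(L) with α > 0 real and R a linear isometry of ℍ ≅ ℝ⁴, then there exist nonzero quaternions p, q ∈ ℍ(K) such that Λ = pLq := {p x q : x ∈ L}, and the map x ↦ pxq is orientation preserving. -/
/-!
Write `T = α R`, so that `Λ = T(L) ⊆ L`. The basis of `L` is also a `K`-basis of `ℍ(K)`, hence `T`
maps `1, i, j, k` into `ℍ(K)`. With `u = T 1 ≠ 0`, the map `S x = u⁻¹ T x` is a linear isometry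
fixing `1`, so `S i, S j, S k` are anticommuting square roots of `-1`. Their product `m` satisfies
`m² = 1`, i.e. `m = ±1`: either `S` or `x ↦ S x̄` respects multiplication of the units. By an
explicit form of the Skolem–Noether theorem (`skolem_noether`), that map is `x ↦ p x p⁻¹` with
`p ∈ ℍ(K)`: the sums `p_z = ∑ₑ S(e) z e⁻¹` over `e ∈ {1, i, j, k}` intertwine, and they cannot
all vanish because `∑_z p_z z⁻¹ = 4`. Since `L` is stable under quaternion conjugation
(`star_mem_Lsub`), in both cases `Λ = (u p) L p⁻¹`. Such maps preserve orientation because left or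
right multiplication by `p` has determinant `|p|⁴`.
-/

noncomputable section

open Quaternion

/-! ### The field `K` and the quaternions over it -/

lemma inK_rat (q : ℚ) : inK q := ⟨q, 0, by simp⟩

lemma inK_zero : inK 0 := by simpa using inK_rat 0

lemma inK_one : inK 1 := by simpa using inK_rat 1

lemma inK_sqrt_five : inK (Real.sqrt 5) := ⟨0, 1, by simp⟩

lemma inK_add {x y : ℝ} (hx : inK x) (hy : inK y) : inK (x + y) := by
  obtain ⟨a, b, rfl⟩ := hx
  obtain ⟨c, d, rfl⟩ := hy
  exact ⟨a + c, b + d, by push_cast; ring⟩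

lemma inK_neg {x : ℝ} (hx : inK x) : inK (-x) := by
  obtain ⟨a, b, rfl⟩ := hx
  exact ⟨-a, -b, by push_cast; ring⟩

lemma inK_sub {x y : ℝ} (hx : inK x) (hy : inK y) : inK (x - y) := by
  rw [sub_eq_add_neg]
  exact inK_add hx (inK_neg hy)

lemma sqrt_five_mul_self : Real.sqrt 5 * Real.sqrt 5 = 5 :=
  Real.mul_self_sqrt (by norm_num)

lemma inK_mul {x y : ℝ} (hx : inK x) (hy : inK y) : inK (x * y) := by
  obtain ⟨a, b, rfl⟩ := hx
  obtain ⟨c, d, rfl⟩ := hy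
  refine ⟨a * c + 5 * b * d, a * d + b * c, ?_⟩
  push_cast
  linear_combination (b * d : ℝ) * sqrt_five_mul_self

lemma irrational_sqrt_five : Irrational (Real.sqrt 5) := by
  have h : Nat.Prime 5 := by norm_num
  simpa using h.irrational_sqrt

lemma inK_inv {x : ℝ} (hx : inK x) : inK x⁻¹ := by
  by_cases h0 : x = 0
  · rw [h0, inv_zero]
    exact inK_zero
  obtain ⟨a, b, rfl⟩ := hx
  -- A vanishing conjugate forces `b = 0` by irrationality of `√5`, and then `a = 0`.
  have h1 : (a : ℝ) - b * Real.sqrt 5 ≠ 0 := by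
    intro h
    by_cases hb : b = 0
    · subst hb
      apply h0
      simpa using h
    · have hb' : (b : ℝ) ≠ 0 := by exact_mod_cast hb
      apply irrational_sqrt_five
      refine ⟨a / b, ?_⟩
      push_cast
      rw [div_eq_iff hb']
      linarith
  have h2 : (a : ℝ) ^ 2 - 5 * b ^ 2 ≠ 0 := by
    have := mul_ne_zero h0 h1
    intro h
    apply this
    linear_combination h - (b ^ 2 : ℝ) * sqrt_five_mul_self
  refine ⟨a / (a ^ 2 - 5 * b ^ 2), -b / (a ^ 2 - 5 * b ^ 2), ?_⟩
  push_cast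
  apply inv_eq_of_mul_eq_one_left
  field_simp
  linear_combination (-b ^ 2 : ℝ) * sqrt_five_mul_self

lemma inK_tau : inK tau := ⟨1 / 2, 1 / 2, by unfold tau; push_cast; ring⟩

lemma inK_half : inK (1 / 2) := by simpa using inK_rat (1 / 2)

lemma inHK_add {x y : HR} (hx : inHK x) (hy : inHK y) : inHK (x + y) :=
  ⟨by simpa using inK_add hx.1 hy.1, by simpa using inK_add hx.2.1 hy.2.1,
    by simpa using inK_add hx.2.2.1 hy.2.2.1, by simpa using inK_add hx.2.2.2 hy.2.2.2⟩

lemma inHK_neg {x : HR} (hx : inHK x) : inHK (-x) :=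
  ⟨by simpa using inK_neg hx.1, by simpa using inK_neg hx.2.1,
    by simpa using inK_neg hx.2.2.1, by simpa using inK_neg hx.2.2.2⟩

lemma inHK_sub {x y : HR} (hx : inHK x) (hy : inHK y) : inHK (x - y) := by
  rw [sub_eq_add_neg]
  exact inHK_add hx (inHK_neg hy)

lemma inHK_smul {a : ℝ} {x : HR} (ha : inK a) (hx : inHK x) : inHK (a • x) :=
  ⟨by simpa using inK_mul ha hx.1, by simpa using inK_mul ha hx.2.1,
    by simpa using inK_mul ha hx.2.2.1, by simpa using inK_mul ha hx.2.2.2⟩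

lemma inHK_star {x : HR} (hx : inHK x) : inHK (star x) :=
  ⟨by simpa using hx.1, by simpa using inK_neg hx.2.1,
    by simpa using inK_neg hx.2.2.1, by simpa using inK_neg hx.2.2.2⟩

lemma inHK_mul {x y : HR} (hx : inHK x) (hy : inHK y) : inHK (x * y) := by
  obtain ⟨h1, h2, h3, h4⟩ := hx
  obtain ⟨k1, k2, k3, k4⟩ := hy
  refine ⟨?_, ?_, ?_, ?_⟩
  · rw [Quaternion.re_mul]
    exact inK_sub (inK_sub (inK_sub (inK_mul h1 k1) (inK_mul h2 k2)) (inK_mul h3 k3))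
      (inK_mul h4 k4)
  · rw [Quaternion.imI_mul]
    exact inK_sub (inK_add (inK_add (inK_mul h1 k2) (inK_mul h2 k1)) (inK_mul h3 k4))
      (inK_mul h4 k3)
  · rw [Quaternion.imJ_mul]
    exact inK_add (inK_add (inK_sub (inK_mul h1 k3) (inK_mul h2 k4)) (inK_mul h3 k1))
      (inK_mul h4 k2)
  · rw [Quaternion.imK_mul]
    exact inK_add (inK_sub (inK_add (inK_mul h1 k4) (inK_mul h2 k3)) (inK_mul h3 k2))
      (inK_mul h4 k1)

lemma inHK_inv {x : HR} (hx : inHK x) : inHK x⁻¹ := by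
  obtain ⟨h1, h2, h3, h4⟩ := hx
  rw [Quaternion.inv_def]
  refine inHK_smul (inK_inv ?_) (inHK_star ⟨h1, h2, h3, h4⟩)
  rw [Quaternion.normSq_def']
  simp only [sq]
  exact inK_add (inK_add (inK_add (inK_mul h1 h1) (inK_mul h2 h2)) (inK_mul h3 h3))
    (inK_mul h4 h4)

lemma inHK_one : inHK 1 :=
  ⟨by simpa using inK_one, by simpa using inK_zero, by simpa using inK_zero,
    by simpa using inK_zero⟩

/-! ### The quaternion units -/

/-- The quaternion unit `i`. -/
def qi : HR := ⟨0, 1, 0, 0⟩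
/-- The quaternion unit `j`. -/
def qj : HR := ⟨0, 0, 1, 0⟩
/-- The quaternion unit `k`. -/
def qk : HR := ⟨0, 0, 0, 1⟩

@[simp] lemma qi_re : qi.re = 0 := rfl
@[simp] lemma qi_imI : qi.imI = 1 := rfl
@[simp] lemma qi_imJ : qi.imJ = 0 := rfl
@[simp] lemma qi_imK : qi.imK = 0 := rfl
@[simp] lemma qj_re : qj.re = 0 := rfl
@[simp] lemma qj_imI : qj.imI = 0 := rfl
@[simp] lemma qj_imJ : qj.imJ = 1 := rfl
@[simp] lemma qj_imK : qj.imK = 0 := rfl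
@[simp] lemma qk_re : qk.re = 0 := rfl
@[simp] lemma qk_imI : qk.imI = 0 := rfl
@[simp] lemma qk_imJ : qk.imJ = 0 := rfl
@[simp] lemma qk_imK : qk.imK = 1 := rfl

lemma inHK_qi : inHK qi := ⟨inK_zero, inK_one, inK_zero, inK_zero⟩
lemma inHK_qj : inHK qj := ⟨inK_zero, inK_zero, inK_one, inK_zero⟩
lemma inHK_qk : inHK qk := ⟨inK_zero, inK_zero, inK_zero, inK_one⟩

lemma qi_qi : qi * qi = -1 := by ext <;> simp
lemma qj_qj : qj * qj = -1 := by ext <;> simp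
lemma qk_qk : qk * qk = -1 := by ext <;> simp
lemma qi_qj : qi * qj = qk := by ext <;> simp
lemma qj_qi : qj * qi = -qk := by ext <;> simp
lemma qj_qk : qj * qk = qi := by ext <;> simp
lemma qk_qj : qk * qj = -qi := by ext <;> simp
lemma qk_qi : qk * qi = qj := by ext <;> simp
lemma qi_qk : qi * qk = -qj := by ext <;> simp

lemma eq_units (x : HR) :
    x = x.re • (1 : HR) + x.imI • qi + x.imJ • qj + x.imK • qk := by
  ext <;> simp

/-- Linear maps on `ℍ` agreeing on `1, i, j, k` are equal. -/
lemma linear_ext_units {f g : HR →ₗ[ℝ] HR} (h1 : f 1 = g 1) (hi : f qi = g qi)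
    (hj : f qj = g qj) (hk : f qk = g qk) (x : HR) : f x = g x := by
  rw [eq_units x]
  simp only [map_add, map_smul, h1, hi, hj, hk]

/-! ### Skolem–Noether over `K` -/

/-- The sum `z + a z i⁻¹ + b z j⁻¹ + c z k⁻¹`, with `i⁻¹ = -i` and so on. It intertwines left
multiplication by `a, b, c` with right multiplication by `i, j, k` as soon as `a, b, c` multiply
like `i, j, k`. -/
def intertwiner (a b c z : HR) : HR := z - a * z * qi - b * z * qj - c * z * qk

/-- If `a, b, c` satisfy the multiplication rules of `i, j, k` and have components in `K`,
then they are simultaneously conjugate to `i, j, k` by an element of `ℍ(K)`. -/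
lemma skolem_noether {a b c : HR} (ha : inHK a) (hb : inHK b) (hc : inHK c)
    (haa : a * a = -1) (hbb : b * b = -1) (hab : a * b = c) (hba : b * a = -c) :
    ∃ p : HR, p ≠ 0 ∧ inHK p ∧ a * p = p * qi ∧ b * p = p * qj ∧ c * p = p * qk := by
  have hac : a * c = -b := by rw [← hab, ← mul_assoc, haa, neg_one_mul]
  have hbc : b * c = a := by
    have : b * c = -(b * (b * a)) := by rw [hba, mul_neg, neg_neg]
    rw [this, ← mul_assoc, hbb, neg_one_mul, neg_neg]
  have hI : ∀ z, a * intertwiner a b c z = intertwiner a b c z * qi := by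
    intro z
    simp only [intertwiner, mul_sub, sub_mul, ← mul_assoc, haa, hab, hac]
    simp only [mul_assoc, qi_qi, qj_qi, qk_qi]
    simp only [← mul_assoc, mul_neg, neg_mul, mul_one, one_mul]
    abel
  have hJ : ∀ z, b * intertwiner a b c z = intertwiner a b c z * qj := by
    intro z
    simp only [intertwiner, mul_sub, sub_mul, ← mul_assoc, hba, hbb, hbc]
    simp only [mul_assoc, qi_qj, qj_qj, qk_qj]
    simp only [← mul_assoc, mul_neg, neg_mul, mul_one, one_mul]
    abel
  have hHK : ∀ z, inHK z → inHK (intertwiner a b c z) := fun z hz =>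
    inHK_sub (inHK_sub (inHK_sub hz (inHK_mul (inHK_mul ha hz) inHK_qi))
      (inHK_mul (inHK_mul hb hz) inHK_qj)) (inHK_mul (inHK_mul hc hz) inHK_qk)
  -- `∑_z p_z z⁻¹ = 4`, as `∑_z z e z⁻¹ = 4 Re e` for the units `z`.
  have hsum : intertwiner a b c 1 - intertwiner a b c qi * qi - intertwiner a b c qj * qj
      - intertwiner a b c qk * qk = 1 + 1 + 1 + 1 := by
    simp only [intertwiner, sub_mul, mul_assoc, qi_qi, qj_qj, qk_qk, qi_qj, qj_qi, qj_qk, qk_qj,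
      qk_qi, qi_qk, mul_neg, neg_mul, mul_one]
    abel
  obtain ⟨z, hz, hne⟩ : ∃ z, inHK z ∧ intertwiner a b c z ≠ 0 := by
    by_contra! h
    rw [h 1 inHK_one, h qi inHK_qi, h qj inHK_qj, h qk inHK_qk] at hsum
    have := congrArg (fun x : HR => x.re) hsum
    simp only [Quaternion.re_add, Quaternion.re_sub, Quaternion.re_one, zero_mul,
      Quaternion.re_zero] at this
    norm_num at this
  refine ⟨_, hne, hHK z hz, hI z, hJ z, ?_⟩
  nth_rewrite 1 [← hab]
  rw [mul_assoc, hJ, ← mul_assoc, hI, mul_assoc, qi_qj]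

/-! ### Isometries fixing `1` -/

lemma norm_sq_components (x : HR) :
    ‖x‖ ^ 2 = x.re ^ 2 + x.imI ^ 2 + x.imJ ^ 2 + x.imK ^ 2 := by
  rw [← Quaternion.normSq_def', Quaternion.normSq_eq_norm_mul_self, sq]

/-- An isometry fixing `1` maps purely imaginary quaternions to such. -/
lemma isometry_re {S : HR →ₗ[ℝ] HR} (h1 : S 1 = 1) (hn : ∀ x, ‖S x‖ = ‖x‖) {x : HR}
    (hx : x.re = 0) : (S x).re = 0 := by
  have h := hn (1 + x)
  have h' := hn x
  rw [map_add, h1] at h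
  have e := congrArg (· ^ 2) h
  have e' := congrArg (· ^ 2) h'
  simp only [norm_sq_components] at e e'
  simp at e e'
  rw [hx] at e e'
  linarith

lemma isometry_sq {S : HR →ₗ[ℝ] HR} (h1 : S 1 = 1) (hn : ∀ x, ‖S x‖ = ‖x‖) {x : HR}
    (hx : x.re = 0) : S x * S x = x * x := by
  have hy := isometry_re h1 hn hx
  have e := congrArg (· ^ 2) (hn x)
  simp only [norm_sq_components] at e
  rw [hx, hy] at e
  ext <;> simp [hx, hy] <;> linarith

lemma isometry_anticomm {S : HR →ₗ[ℝ] HR} (h1 : S 1 = 1) (hn : ∀ x, ‖S x‖ = ‖x‖) {x y : HR}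
    (hx : x.re = 0) (hy : y.re = 0) : S x * S y + S y * S x = x * y + y * x := by
  have h := isometry_sq h1 hn (x := x + y) (by simp [hx, hy])
  have hxx := isometry_sq h1 hn hx
  have hyy := isometry_sq h1 hn hy
  rw [map_add] at h
  simp only [mul_add, add_mul, hxx, hyy] at h
  have e : ∀ A B C D E F : HR, A + B + (C + D) = A + E + (F + D) → C + B = F + E := by
    intro A B C D E F h
    have h2 : A + D + (C + B) = A + D + (F + E) := by
      calc A + D + (C + B) = A + B + (C + D) := by abel
        _ = A + E + (F + D) := h
        _ = A + D + (F + E) := by abel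
    exact add_left_cancel h2
  exact e _ _ _ _ _ _ h

/-- Conjugation of quaternions as an `ℝ`-linear map. -/
def starLin : HR →ₗ[ℝ] HR where
  toFun := star
  map_add' := star_add
  map_smul' := fun r x => by simp

/-- If `i, j, k` have images in `ℍ(K)` under an isometry `S` fixing `1`, then `S` is, up to
quaternion conjugation, an inner automorphism given by an element of `ℍ(K)`. -/
lemma isometry_inner {S : HR →ₗ[ℝ] HR} (h1 : S 1 = 1) (hn : ∀ x, ‖S x‖ = ‖x‖)
    (hi : inHK (S qi)) (hj : inHK (S qj)) (hk : inHK (S qk)) :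
    ∃ p : HR, p ≠ 0 ∧ inHK p ∧
      ((∀ x, S x = p * x * p⁻¹) ∨ (∀ x, S (star x) = p * x * p⁻¹)) := by
  have haa : S qi * S qi = -1 := by rw [isometry_sq h1 hn rfl, qi_qi]
  have hbb : S qj * S qj = -1 := by rw [isometry_sq h1 hn rfl, qj_qj]
  have hcc : S qk * S qk = -1 := by rw [isometry_sq h1 hn rfl, qk_qk]
  have hba : S qj * S qi = -(S qi * S qj) := by
    rw [eq_neg_iff_add_eq_zero, isometry_anticomm h1 hn rfl rfl, qi_qj, qj_qi, neg_add_cancel]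
  have hca : S qk * S qi = -(S qi * S qk) := by
    rw [eq_neg_iff_add_eq_zero, isometry_anticomm h1 hn rfl rfl, qi_qk, qk_qi, add_neg_cancel]
  have hcb : S qk * S qj = -(S qj * S qk) := by
    rw [eq_neg_iff_add_eq_zero, isometry_anticomm h1 hn rfl rfl, qk_qj, qj_qk, neg_add_cancel]
  have hm : (S qi * S qj * S qk) * (S qi * S qj * S qk) = 1 := by
    calc (S qi * S qj * S qk) * (S qi * S qj * S qk)
        = S qi * S qj * (S qk * S qi) * S qj * S qk := by simp only [mul_assoc]
      _ = -(S qi * (S qj * S qi) * (S qk * S qj) * S qk) := by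
          rw [hca]; simp only [mul_assoc, mul_neg, neg_mul]
      _ = -((S qi * S qi) * (S qj * S qj) * (S qk * S qk)) := by
          rw [hba, hcb]; simp only [mul_assoc, mul_neg, neg_mul, neg_neg]
      _ = 1 := by rw [haa, hbb, hcc]; simp
  have hab : S qi * S qj = -(S qi * S qj * S qk) * S qk := by
    rw [neg_mul, mul_assoc _ (S qk), hcc, mul_neg, mul_one, neg_neg]
  -- `S qk` is `±` the product of `S qi` and `S qj`; the sign is the orientation of `S`.
  rcases mul_self_eq_one_iff.mp hm with h | h
  · have hab' : (-S qi) * (-S qj) = -S qk := by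
      rw [neg_mul_neg, hab, h, neg_one_mul]
    obtain ⟨p, hp, hpK, pi, pj, pk⟩ := skolem_noether (inHK_neg hi) (inHK_neg hj) (inHK_neg hk)
      (by rw [neg_mul_neg, haa]) (by rw [neg_mul_neg, hbb]) hab'
      (by rw [← hab', neg_mul_neg, neg_mul_neg, hba])
    refine ⟨p, hp, hpK, Or.inr fun x => ?_⟩
    refine linear_ext_units (f := S ∘ₗ starLin)
      (g := LinearMap.mulRight ℝ p⁻¹ ∘ₗ LinearMap.mulLeft ℝ p) ?_ ?_ ?_ ?_ x
    · simp [starLin, h1, hp]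
    · have : star qi = -qi := by ext <;> simp
      simp [starLin, this, ← pi, hp]
    · have : star qj = -qj := by ext <;> simp
      simp [starLin, this, ← pj, hp]
    · have : star qk = -qk := by ext <;> simp
      simp [starLin, this, ← pk, hp]
  · have hab' : S qi * S qj = S qk := by
      rw [hab, h, neg_neg, one_mul]
    obtain ⟨p, hp, hpK, pi, pj, pk⟩ := skolem_noether hi hj hk haa hbb hab'
      (by rw [hba, hab'])
    refine ⟨p, hp, hpK, Or.inl fun x => ?_⟩
    refine linear_ext_units (f := S)
      (g := LinearMap.mulRight ℝ p⁻¹ ∘ₗ LinearMap.mulLeft ℝ p) ?_ ?_ ?_ ?_ x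
    · simp [h1, hp]
    · simp [← pi, hp]
    · simp [← pj, hp]
    · simp [← pk, hp]

/-! ### The lattice `L` -/

@[simp] lemma w₁_re : w₁.re = 1 := rfl
@[simp] lemma w₁_imI : w₁.imI = 0 := rfl
@[simp] lemma w₁_imJ : w₁.imJ = 0 := rfl
@[simp] lemma w₁_imK : w₁.imK = 0 := rfl
@[simp] lemma w₂_re : w₂.re = -(1 / 2) := rfl
@[simp] lemma w₂_imI : w₂.imI = 1 / 2 := rfl
@[simp] lemma w₂_imJ : w₂.imJ = 1 / 2 := rfl
@[simp] lemma w₂_imK : w₂.imK = 1 / 2 := rfl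
@[simp] lemma w₃_re : w₃.re = 0 := rfl
@[simp] lemma w₃_imI : w₃.imI = -1 := rfl
@[simp] lemma w₃_imJ : w₃.imJ = 0 := rfl
@[simp] lemma w₃_imK : w₃.imK = 0 := rfl
@[simp] lemma w₄_re : w₄.re = 0 := rfl
@[simp] lemma w₄_imI : w₄.imI = 1 / 2 := rfl
@[simp] lemma w₄_imJ : w₄.imJ = (tau - 1) / 2 := rfl
@[simp] lemma w₄_imK : w₄.imK = -(tau / 2) := rfl

lemma inHK_w₁ : inHK w₁ := ⟨inK_one, inK_zero, inK_zero, inK_zero⟩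
lemma inHK_w₂ : inHK w₂ := ⟨inK_neg inK_half, inK_half, inK_half, inK_half⟩
lemma inHK_w₃ : inHK w₃ := ⟨inK_zero, inK_neg inK_one, inK_zero, inK_zero⟩
lemma inHK_w₄ : inHK w₄ := by
  refine ⟨inK_zero, inK_half, ?_, inK_neg ?_⟩
  · simpa only [w₄_imJ, mul_one_div] using inK_mul (inK_sub inK_tau inK_one) inK_half
  · simpa only [mul_one_div] using inK_mul inK_tau inK_half

lemma w₁_mem : w₁ ∈ Lsub := Submodule.subset_span (by simp)
lemma w₂_mem : w₂ ∈ Lsub := Submodule.subset_span (by simp)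
lemma w₃_mem : w₃ ∈ Lsub := Submodule.subset_span (by simp)
lemma w₄_mem : w₄ ∈ Lsub := Submodule.subset_span (by simp)

/-- Induction on elements of `L` from its four generators. -/
lemma Lsub_induction {P : HR → Prop} (h1 : P w₁) (h2 : P w₂) (h3 : P w₃) (h4 : P w₄)
    (hadd : ∀ x y, P x → P y → P (x + y)) (hneg : ∀ x, P x → P (-x)) {x : HR}
    (hx : x ∈ Lsub) : P x := by
  have hx' : x ∈ Submodule.span ℤ ({w₁, w₂, w₃, w₄} : Set HR) := hx
  have h0 : P 0 := by simpa using hadd _ _ h1 (hneg _ h1)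
  rw [← Submodule.mem_toAddSubgroup, Submodule.span_int_eq_addSubgroupClosure] at hx'
  refine AddSubgroup.closure_induction (p := fun x _ => P x) ?_ h0 (fun x y _ _ => hadd x y)
    (fun x _ => hneg x) hx'
  rintro y (rfl | rfl | rfl | rfl) <;> assumption

lemma inHK_of_mem {x : HR} (hx : x ∈ Lsub) : inHK x :=
  Lsub_induction inHK_w₁ inHK_w₂ inHK_w₃ inHK_w₄ (fun _ _ => inHK_add) (fun _ => inHK_neg) hx

lemma star_mem_Lsub {x : HR} (hx : x ∈ Lsub) : star x ∈ Lsub := by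
  refine Lsub_induction (P := fun x => star x ∈ Lsub) ?_ ?_ ?_ ?_ ?_ ?_ hx
  · have : star w₁ = w₁ := by ext <;> simp
    rw [this]
    exact w₁_mem
  · have : star w₂ = -w₂ - w₁ := by ext <;> simp; norm_num
    rw [this]
    exact sub_mem (neg_mem w₂_mem) w₁_mem
  · have : star w₃ = -w₃ := by ext <;> simp
    rw [this]
    exact neg_mem w₃_mem
  · have : star w₄ = -w₄ := by ext <;> simp
    rw [this]
    exact neg_mem w₄_mem
  · intro x y hx hy
    rw [star_add]
    exact add_mem hx hy
  · intro x hx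
    rw [star_neg]
    exact neg_mem hx

lemma one_eq : (1 : HR) = w₁ := by ext <;> simp
lemma qi_eq : qi = -w₃ := by ext <;> simp

/-- `j + k ∈ L`, and `τ (j + k)` differs from `√5 j` by an element of `L`. -/
lemma qj_eq : qj = (Real.sqrt 5)⁻¹ • (tau • (w₂ + w₂ + w₁ + w₃) + (w₄ + w₄ + w₃)) := by
  have h5 : Real.sqrt 5 ≠ 0 := by positivity
  rw [eq_inv_smul_iff₀ h5]
  ext <;> simp [tau] <;> ring

lemma qk_eq : qk = w₂ + w₂ + w₁ + w₃ - qj := by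
  ext <;> simp <;> norm_num

/-! ### Orientation -/

/-- The basis `1, i, j, k` of `ℍ`. -/
def unitBasis : Module.Basis (Fin 4) ℝ HR := QuaternionAlgebra.basisOneIJK (-1) 0 (-1)

lemma unitBasis_repr (x : HR) (n : Fin 4) :
    unitBasis.repr x n = ![x.re, x.imI, x.imJ, x.imK] n := rfl

lemma unitBasis_apply (n : Fin 4) : unitBasis n = ![1, qi, qj, qk] n := by
  apply unitBasis.repr.injective
  ext m
  rw [Module.Basis.repr_self, unitBasis_repr]
  fin_cases n <;> fin_cases m <;> simp

lemma det_mulLeft (p : HR) : LinearMap.det (LinearMap.mulLeft ℝ p) = (‖p‖ ^ 2) ^ 2 := by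
  have : LinearMap.toMatrix unitBasis unitBasis (LinearMap.mulLeft ℝ p) =
      !![p.re, -p.imI, -p.imJ, -p.imK; p.imI, p.re, -p.imK, p.imJ;
        p.imJ, p.imK, p.re, -p.imI; p.imK, -p.imJ, p.imI, p.re] := by
    ext m n
    rw [LinearMap.toMatrix_apply, unitBasis_repr, unitBasis_apply]
    fin_cases m <;> fin_cases n <;> simp
  rw [← LinearMap.det_toMatrix unitBasis, norm_sq_components]
  rw [this]
  simp [Matrix.det_succ_row_zero, Fin.sum_univ_succ, Fin.succAbove]
  ring

lemma det_mulRight (q : HR) : LinearMap.det (LinearMap.mulRight ℝ q) = (‖q‖ ^ 2) ^ 2 := by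
  have h : LinearMap.mulRight ℝ q = starLin ∘ₗ LinearMap.mulLeft ℝ (star q) ∘ₗ starLin := by
    ext1 x
    simp [starLin]
  have hs : starLin ∘ₗ starLin = LinearMap.id := by
    ext1 x
    simp [starLin]
  have hd : LinearMap.det starLin * LinearMap.det starLin = 1 := by
    rw [← LinearMap.det_comp, hs, LinearMap.det_id]
  rw [h, LinearMap.det_comp, LinearMap.det_comp, det_mulLeft, norm_star]
  linear_combination (‖q‖ ^ 2) ^ 2 * hd

/-- every SSL of `L` is the image of `L` under an
orientation-preserving map `x ↦ p x q` with nonzero `p, q ∈ ℍ(K)`. -/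
theorem ssl_is_image_of_pxq (Λ : AddSubgroup HR) (h : IsSSL Λ) :
    ∃ p q : HR, p ≠ 0 ∧ q ≠ 0 ∧ inHK p ∧ inHK q ∧
      (Λ : Set HR) = (fun x => p * x * q) '' (Lsub : Set HR) ∧
      0 < LinearMap.det ((LinearMap.mulLeft ℝ p).comp (LinearMap.mulRight ℝ q)) := by
  obtain ⟨α, R, hα, hΛ, hle⟩ := h
  have hT : ∀ x ∈ Lsub, inHK (α • R x) := fun x hx =>
    inHK_of_mem (hle (show α • R x ∈ (Λ : Set HR) by rw [hΛ]; exact ⟨x, hx, rfl⟩))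
  set u : HR := α • R 1 with hu
  have hun : ‖u‖ = α := by
    rw [hu, norm_smul, R.norm_map, norm_one, mul_one, Real.norm_of_nonneg hα.le]
  have hu0 : u ≠ 0 := by
    rw [← norm_pos_iff, hun]
    exact hα
  have huK : inHK u := by
    rw [hu, one_eq]
    exact hT _ w₁_mem
  let S : HR →ₗ[ℝ] HR := LinearMap.mulLeft ℝ u⁻¹ ∘ₗ (α • R.toLinearEquiv.toLinearMap)
  have hS : ∀ x, S x = u⁻¹ * (α • R x) := fun x => rfl
  have hTS : ∀ x, α • R x = u * S x := fun x => by
    rw [hS, ← mul_assoc, mul_inv_cancel₀ hu0, one_mul]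
  have h1 : S 1 = 1 := by rw [hS, ← hu, inv_mul_cancel₀ hu0]
  have hn : ∀ x, ‖S x‖ = ‖x‖ := fun x => by
    rw [hS, norm_mul, norm_inv, hun, norm_smul, R.norm_map, Real.norm_of_nonneg hα.le,
      inv_mul_cancel_left₀ hα.ne']
  have hSL : ∀ x ∈ Lsub, inHK (S x) := fun x hx => inHK_mul (inHK_inv huK) (hT x hx)
  have hA : w₂ + w₂ + w₁ + w₃ ∈ Lsub :=
    add_mem (add_mem (add_mem w₂_mem w₂_mem) w₁_mem) w₃_mem
  have hi : inHK (S qi) := by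
    rw [qi_eq]
    exact hSL _ (neg_mem w₃_mem)
  have hj : inHK (S qj) := by
    rw [qj_eq, map_smul, map_add, map_smul]
    exact inHK_smul (inK_inv inK_sqrt_five) (inHK_add (inHK_smul inK_tau (hSL _ hA))
      (hSL _ (add_mem (add_mem w₄_mem w₄_mem) w₃_mem)))
  have hk : inHK (S qk) := by
    rw [qk_eq, map_sub]
    exact inHK_sub (hSL _ hA) hj
  obtain ⟨p, hp, hpK, hp'⟩ := isometry_inner h1 hn hi hj hk
  refine ⟨u * p, p⁻¹, mul_ne_zero hu0 hp, inv_ne_zero hp, inHK_mul huK hpK, inHK_inv hpK, ?_, ?_⟩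
  · rw [hΛ]
    rcases hp' with hp' | hp'
    · refine Set.image_congr fun x _ => ?_
      simp only [hTS, hp', mul_assoc]
    · ext y
      constructor
      · rintro ⟨x, hx, rfl⟩
        refine ⟨star x, star_mem_Lsub hx, ?_⟩
        simp only [hTS]
        rw [← star_star x, hp', star_star]
        simp only [mul_assoc]
      · rintro ⟨x, hx, rfl⟩
        refine ⟨star x, star_mem_Lsub hx, ?_⟩
        simp only [hTS, hp', mul_assoc]
  · rw [LinearMap.det_comp, det_mulLeft, det_mulRight]
    have := norm_pos_iff.mpr (mul_ne_zero hu0 hp)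
    have := norm_pos_iff.mpr (inv_ne_zero hp)
    positivity
end
end
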